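/- Let G be a connected simple graph on the vertex set {1,…,n} (n ≥ 2) with non-empty edge set E, let (𝔫_G, ⟨·,·⟩) be the associated real metric Lie algebra, and let T be a Killing–Yano tensor on (𝔫_G, ⟨·,·⟩). Then for any two distinct indices i ≠ k one has ⟨Te_i, e_k⟩ = ⟨Te_i, f_k⟩ = ⟨Tf_i, e_k⟩ = ⟨Tf_i, f_k⟩ = 0; consequently, for each i there exists a_i ∈ ℝ with Te_i = a_i·f_i and Tf_i = −a_i·e_i. -/

import Mathlib

/-- `x` belongs to the center of the Lie algebra `V`. -/
def IsCentral {V : Type*} [LieRing V] (x : V) : Prop := ∀ y : V, ⁅x, y⁆ = 0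

/-- Membership in `𝔳 = 𝔷^⊥`, the orthogonal complement of the center with respect to the
inner product `B`. -/
def InVperp {V : Type*} [LieRing V] [LieAlgebra ℝ V]
    (B : V →ₗ[ℝ] V →ₗ[ℝ] ℝ) (x : V) : Prop :=
  ∀ z : V, IsCentral z → B x z = 0

/-- The Lie algebra `V` is 2-step nilpotent: non-abelian and `⁅⁅V,V⁆,V⁆ = 0`. -/
def TwoStepNilpotent (V : Type*) [LieRing V] : Prop :=
  (∃ x y : V, ⁅x, y⁆ ≠ 0) ∧ ∀ x y z : V, ⁅⁅x, y⁆, z⁆ = 0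

/-- A Killing–Yano tensor on `(V, B)`: a skew-symmetric endomorphism preserving the center
and satisfying `T⁅x,y⁆ = 3⁅Tx,y⁆` for `x, y ∈ 𝔳 = 𝔷^⊥`. -/
def IsKY {V : Type*} [LieRing V] [LieAlgebra ℝ V]
    (B : V →ₗ[ℝ] V →ₗ[ℝ] ℝ) (T : V →ₗ[ℝ] V) : Prop :=
  (∀ x y : V, B (T x) y = - B x (T y)) ∧
  (∀ z : V, IsCentral z → IsCentral (T z)) ∧
  (∀ x y : V, InVperp B x → InVperp B y → T ⁅x, y⁆ = (3 : ℝ) • ⁅T x, y⁆)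

/-- The Koszul formula characterizing the Levi-Civita product of `(V, B)`. -/
def IsLeviCivita {V : Type*} [LieRing V] [LieAlgebra ℝ V]
    (B : V →ₗ[ℝ] V →ₗ[ℝ] ℝ) (nab : V → V → V) : Prop :=
  ∀ x y z : V, 2 * B (nab x y) z = B ⁅x, y⁆ z - B ⁅y, z⁆ x + B ⁅z, x⁆ y

/-!
For `x, y ∈ 𝔳` the Killing–Yano equation and the skew-symmetry of the bracket give
`⁅T x, y⁆ = ⁅x, T y⁆`, hence `⁅x, T x⁆ = 0`. For an edge `{j, k}` the component of `⁅e_j, x⁆` along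
`z_{jk}`, respectively `w_{jk}`, is up to sign the component of `x` along `e_k`, respectively `f_k`.
So the components of `T e_i` at `k ≠ i` are read off `⁅e_j, T e_i⁆` for a neighbour `j` of `k`. This
bracket is zero if `j = i`; otherwise it equals `-⁅e_i, T e_j⁆`, which has no component on an edge
avoiding `i`. Finally `T` preserves `𝔳` and is skew-symmetric, so `T e_i` is a multiple of `f_i`.
-/

namespace IsKY

variable {V : Type*} [LieRing V] [LieAlgebra ℝ V] {B : V →ₗ[ℝ] V →ₗ[ℝ] ℝ} {T : V →ₗ[ℝ] V} {x y : V}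

lemma inVperp_map (hT : IsKY B T) (hx : InVperp B x) : InVperp B (T x) := fun c hc => by
  rw [hT.1, hx _ (hT.2.1 c hc), neg_zero]

lemma lie_map_comm (hT : IsKY B T) (hx : InVperp B x) (hy : InVperp B y) :
    ⁅T x, y⁆ = ⁅x, T y⁆ := by
  have three_smul_eq : (3 : ℝ) • ⁅T x, y⁆ = (3 : ℝ) • ⁅x, T y⁆ := by
    rw [← hT.2.2 x y hx hy, ← lie_skew x y, ← lie_skew x (T y), map_neg, hT.2.2 y x hy hx, smul_neg]
  exact smul_right_injective V three_ne_zero three_smul_eq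

lemma lie_map_self (hT : IsKY B T) (hx : InVperp B x) : ⁅x, T x⁆ = 0 := by
  have : IsAddTorsionFree V := .of_isTorsionFree ℝ V
  rw [← self_eq_neg, lie_skew, hT.lie_map_comm hx hx]

end IsKY

lemma span_range_neg {R M κ : Type*} [Ring R] [AddCommGroup M] [Module R M] (u : κ → M) :
    Submodule.span R (Set.range (-u)) = Submodule.span R (Set.range u) := by
  have range_neg : Set.range (-u) = -Set.range u := by
    ext x
    simp [neg_eq_iff_eq_neg]
  rw [range_neg, Submodule.span_neg]

/-- The sign of the edge `{i, j}` traversed from `i` to `j`, edges being oriented from their smaller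
to their larger endpoint. -/
def edgeSign {ι : Type*} [LinearOrder ι] (i j : ι) : ℝ := if i < j then 1 else -1

lemma edgeSign_ne_zero {ι : Type*} [LinearOrder ι] (i j : ι) : edgeSign i j ≠ 0 := by
  unfold edgeSign
  split_ifs <;> norm_num

lemma lie_eq_edgeSign_smul {ι : Type*} [LinearOrder ι] {G : SimpleGraph ι}
    {V : Type*} [LieRing V] [LieAlgebra ℝ V] {x y : ι → V} {u : G.edgeSet → V}
    (hxy : ∀ i j, ∀ h : G.Adj i j, i < j → ⁅x i, y j⁆ = u ⟨s(i, j), G.mem_edgeSet.mpr h⟩)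
    (hyx : ∀ i j, ∀ h : G.Adj i j, i < j → ⁅y i, x j⁆ = u ⟨s(i, j), G.mem_edgeSet.mpr h⟩)
    {i j : ι} (h : G.Adj i j) :
    ⁅x i, y j⁆ = edgeSign i j • u ⟨s(i, j), G.mem_edgeSet.mpr h⟩ := by
  obtain hlt | hgt := h.ne.lt_or_gt
  · rw [edgeSign, if_pos hlt, one_smul, hxy i j h hlt]
  · have edge_swap : (⟨s(i, j), G.mem_edgeSet.mpr h⟩ : G.edgeSet) =
        ⟨s(j, i), G.mem_edgeSet.mpr h.symm⟩ := Subtype.ext Sym2.eq_swap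
    rw [edgeSign, if_neg hgt.not_gt, neg_one_smul, edge_swap, ← hyx j i h.symm hgt, lie_skew]

/-- The families `e`, `f`, `z`, `w` form an orthonormal basis of `V`, for the inner product `B`,
in which the bracket of `V` is that of the Lie algebra `𝔫_G`. The vertices may be any linearly
ordered type; the order orients the edges. -/
structure IsGraphLieBasis {ι : Type*} [LinearOrder ι] (G : SimpleGraph ι)
    {V : Type*} [LieRing V] [LieAlgebra ℝ V] (B : V →ₗ[ℝ] V →ₗ[ℝ] ℝ)
    (e f : ι → V) (z w : G.edgeSet → V) : Prop where
  symm : ∀ x y : V, B x y = B y x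
  pos : ∀ x : V, x ≠ 0 → 0 < B x x
  inner_e_e : ∀ i j, B (e i) (e j) = if i = j then 1 else 0
  inner_f_f : ∀ i j, B (f i) (f j) = if i = j then 1 else 0
  inner_z_z : ∀ s t, B (z s) (z t) = if s = t then 1 else 0
  inner_w_w : ∀ s t, B (w s) (w t) = if s = t then 1 else 0
  inner_e_f : ∀ i j, B (e i) (f j) = 0
  inner_e_z : ∀ i s, B (e i) (z s) = 0
  inner_e_w : ∀ i s, B (e i) (w s) = 0
  inner_f_z : ∀ i s, B (f i) (z s) = 0
  inner_f_w : ∀ i s, B (f i) (w s) = 0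
  inner_z_w : ∀ s t, B (z s) (w t) = 0
  span_eq_top : Submodule.span ℝ
    (Set.range e ∪ Set.range f ∪ Set.range z ∪ Set.range w) = ⊤
  lie_e_e_of_lt : ∀ i j, ∀ h : G.Adj i j, i < j →
    ⁅e i, e j⁆ = z ⟨s(i, j), G.mem_edgeSet.mpr h⟩
  lie_f_f_of_lt : ∀ i j, ∀ h : G.Adj i j, i < j →
    ⁅f i, f j⁆ = -z ⟨s(i, j), G.mem_edgeSet.mpr h⟩
  lie_e_f_of_lt : ∀ i j, ∀ h : G.Adj i j, i < j →
    ⁅e i, f j⁆ = w ⟨s(i, j), G.mem_edgeSet.mpr h⟩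
  lie_f_e_of_lt : ∀ i j, ∀ h : G.Adj i j, i < j →
    ⁅f i, e j⁆ = w ⟨s(i, j), G.mem_edgeSet.mpr h⟩
  lie_of_not_adj : ∀ i j, ¬ G.Adj i j →
    ⁅e i, e j⁆ = 0 ∧ ⁅e i, f j⁆ = 0 ∧ ⁅f i, e j⁆ = 0 ∧ ⁅f i, f j⁆ = 0
  isCentral_z : ∀ s, IsCentral (z s)
  isCentral_w : ∀ s, IsCentral (w s)

namespace IsGraphLieBasis

variable {ι : Type*} [LinearOrder ι] {G : SimpleGraph ι} {V : Type*} [LieRing V] [LieAlgebra ℝ V]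
  {B : V →ₗ[ℝ] V →ₗ[ℝ] ℝ} {e f : ι → V} {z w : G.edgeSet → V}

-- `𝔫_G` is a complex Lie algebra with `f = i e` and `w = i z`. Multiplying the vectors at the
-- vertices by `i` turns `(e, f)` into `(f, -e)` and multiplies brackets by `-1`.
lemma rotate (h : IsGraphLieBasis G B e f z w) : IsGraphLieBasis G B f (-e) (-z) (-w) where
  symm := h.symm
  pos := h.pos
  inner_e_e := h.inner_f_f
  inner_f_f := by simp [h.inner_e_e]
  inner_z_z := by simp [h.inner_z_z]
  inner_w_w := by simp [h.inner_w_w]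
  inner_e_f i j := by simp [h.symm (f i), h.inner_e_f]
  inner_e_z := by simp [h.inner_f_z]
  inner_e_w := by simp [h.inner_f_w]
  inner_f_z := by simp [h.inner_e_z]
  inner_f_w := by simp [h.inner_e_w]
  inner_z_w := by simp [h.inner_z_w]
  span_eq_top := by
    rw [← h.span_eq_top]
    simp only [Submodule.span_union, span_range_neg]
    rw [sup_comm (Submodule.span ℝ (Set.range f))]
  lie_e_e_of_lt := h.lie_f_f_of_lt
  lie_f_f_of_lt i j hij hlt := by simp [h.lie_e_e_of_lt i j hij hlt]
  lie_e_f_of_lt i j hij hlt := by simp [h.lie_f_e_of_lt i j hij hlt]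
  lie_f_e_of_lt i j hij hlt := by simp [h.lie_e_f_of_lt i j hij hlt]
  lie_of_not_adj i j hij := by simp [h.lie_of_not_adj i j hij]
  isCentral_z s y := by simp [h.isCentral_z s y]
  isCentral_w s y := by simp [h.isCentral_w s y]

lemma linearMap_ext (h : IsGraphLieBasis G B e f z w) {M : Type*} [AddCommMonoid M] [Module ℝ M]
    {φ ψ : V →ₗ[ℝ] M} (he : ∀ i, φ (e i) = ψ (e i)) (hf : ∀ i, φ (f i) = ψ (f i))
    (hz : ∀ s, φ (z s) = ψ (z s)) (hw : ∀ s, φ (w s) = ψ (w s)) : φ = ψ := by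
  refine LinearMap.ext_on h.span_eq_top ?_
  rintro _ (((⟨i, rfl⟩ | ⟨i, rfl⟩) | ⟨s, rfl⟩) | ⟨s, rfl⟩)
  exacts [he i, hf i, hz s, hw s]

lemma eq_zero_of_inner_eq_zero (h : IsGraphLieBasis G B e f z w) {x : V} (hx : InVperp B x)
    (he : ∀ i, B x (e i) = 0) (hf : ∀ i, B x (f i) = 0) : x = 0 := by
  have inner_eq_zero : B x = 0 :=
    h.linearMap_ext he hf (fun s => hx _ (h.isCentral_z s)) (fun s => hx _ (h.isCentral_w s))
  by_contra hne
  exact (h.pos x hne).ne' (LinearMap.congr_fun inner_eq_zero x)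

lemma lie_e_e (h : IsGraphLieBasis G B e f z w) {i j : ι} (hij : G.Adj i j) :
    ⁅e i, e j⁆ = edgeSign i j • z ⟨s(i, j), G.mem_edgeSet.mpr hij⟩ :=
  lie_eq_edgeSign_smul h.lie_e_e_of_lt h.lie_e_e_of_lt hij

lemma lie_e_f (h : IsGraphLieBasis G B e f z w) {i j : ι} (hij : G.Adj i j) :
    ⁅e i, f j⁆ = edgeSign i j • w ⟨s(i, j), G.mem_edgeSet.mpr hij⟩ :=
  lie_eq_edgeSign_smul h.lie_e_f_of_lt h.lie_f_e_of_lt hij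

lemma lie_e_z (h : IsGraphLieBasis G B e f z w) (i : ι) (s : G.edgeSet) : ⁅e i, z s⁆ = 0 := by
  rw [← lie_skew, h.isCentral_z, neg_zero]

lemma lie_e_w (h : IsGraphLieBasis G B e f z w) (i : ι) (s : G.edgeSet) : ⁅e i, w s⁆ = 0 := by
  rw [← lie_skew, h.isCentral_w, neg_zero]

lemma inner_lie_e_z (h : IsGraphLieBasis G B e f z w) {j k : ι} (hjk : G.Adj j k) (x : V) :
    B ⁅e j, x⁆ (z ⟨s(j, k), G.mem_edgeSet.mpr hjk⟩) = edgeSign j k * B x (e k) := by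
  suffices B.flip (z ⟨s(j, k), G.mem_edgeSet.mpr hjk⟩) ∘ₗ LieAlgebra.ad ℝ V (e j) =
      edgeSign j k • B.flip (e k) from LinearMap.congr_fun this x
  refine h.linearMap_ext (fun i => ?_) (fun i => ?_) (fun s => ?_) (fun s => ?_)
  · by_cases hji : G.Adj j i
    · obtain rfl | hik := eq_or_ne i k
      · simp [h.lie_e_e hji, h.inner_z_z, h.inner_e_e]
      · simp [h.lie_e_e hji, h.inner_z_z, h.inner_e_e, hik, hji.ne']
    · have hik : i ≠ k := fun hik => hji (hik ▸ hjk)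
      simp [h.lie_of_not_adj j i hji, h.inner_e_e, hik]
  · by_cases hji : G.Adj j i
    · simp [h.lie_e_f hji, h.symm (w _), h.inner_z_w, h.symm (f _), h.inner_e_f]
    · simp [h.lie_of_not_adj j i hji, h.symm (f _), h.inner_e_f]
  · simp [h.lie_e_z, h.symm (z _), h.inner_e_z]
  · simp [h.lie_e_w, h.symm (w _), h.inner_e_w]

lemma inner_lie_e_w (h : IsGraphLieBasis G B e f z w) {j k : ι} (hjk : G.Adj j k) (x : V) :
    B ⁅e j, x⁆ (w ⟨s(j, k), G.mem_edgeSet.mpr hjk⟩) = edgeSign j k * B x (f k) := by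
  suffices B.flip (w ⟨s(j, k), G.mem_edgeSet.mpr hjk⟩) ∘ₗ LieAlgebra.ad ℝ V (e j) =
      edgeSign j k • B.flip (f k) from LinearMap.congr_fun this x
  refine h.linearMap_ext (fun i => ?_) (fun i => ?_) (fun s => ?_) (fun s => ?_)
  · by_cases hji : G.Adj j i
    · simp [h.lie_e_e hji, h.inner_z_w, h.inner_e_f]
    · simp [h.lie_of_not_adj j i hji, h.inner_e_f]
  · by_cases hji : G.Adj j i
    · obtain rfl | hik := eq_or_ne i k
      · simp [h.lie_e_f hji, h.inner_w_w, h.inner_f_f]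
      · simp [h.lie_e_f hji, h.inner_w_w, h.inner_f_f, hik, hji.ne']
    · have hik : i ≠ k := fun hik => hji (hik ▸ hjk)
      simp [h.lie_of_not_adj j i hji, h.inner_f_f, hik]
  · simp [h.lie_e_z, h.symm (z _), h.inner_f_z]
  · simp [h.lie_e_w, h.symm (w _), h.inner_f_w]

lemma inner_lie_e_eq_zero_of_notMem (h : IsGraphLieBasis G B e f z w) {i : ι} {s : G.edgeSet}
    (hi : i ∉ (s : Sym2 ι)) (x : V) : B ⁅e i, x⁆ (z s) = 0 ∧ B ⁅e i, x⁆ (w s) = 0 := by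
  have edge_ne {j : ι} (hij : G.Adj i j) : (⟨s(i, j), G.mem_edgeSet.mpr hij⟩ : G.edgeSet) ≠ s := by
    rintro rfl
    simp at hi
  suffices B.flip (z s) ∘ₗ LieAlgebra.ad ℝ V (e i) = 0 ∧
      B.flip (w s) ∘ₗ LieAlgebra.ad ℝ V (e i) = 0 from
    ⟨LinearMap.congr_fun this.1 x, LinearMap.congr_fun this.2 x⟩
  constructor
  · refine h.linearMap_ext (fun j => ?_) (fun j => ?_) (by simp [h.lie_e_z]) (by simp [h.lie_e_w])
    all_goals by_cases hij : G.Adj i j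
    · simp [h.lie_e_e hij, h.inner_z_z, edge_ne hij]
    · simp [h.lie_of_not_adj i j hij]
    · simp [h.lie_e_f hij, h.symm (w _), h.inner_z_w]
    · simp [h.lie_of_not_adj i j hij]
  · refine h.linearMap_ext (fun j => ?_) (fun j => ?_) (by simp [h.lie_e_z]) (by simp [h.lie_e_w])
    all_goals by_cases hij : G.Adj i j
    · simp [h.lie_e_e hij, h.inner_z_w]
    · simp [h.lie_of_not_adj i j hij]
    · simp [h.lie_e_f hij, h.inner_w_w, edge_ne hij]
    · simp [h.lie_of_not_adj i j hij]

lemma isCentral_e (h : IsGraphLieBasis G B e f z w) {i : ι} (hi : G.IsIsolated i) :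
    IsCentral (e i) := by
  suffices (LieAlgebra.ad ℝ V (e i) : V →ₗ[ℝ] V) = 0 from LinearMap.congr_fun this
  exact h.linearMap_ext (by simp [h.lie_of_not_adj i _ (hi _)])
    (by simp [h.lie_of_not_adj i _ (hi _)]) (by simp [h.lie_e_z]) (by simp [h.lie_e_w])

lemma inVperp_e (h : IsGraphLieBasis G B e f z w) {i : ι} (hi : ¬ G.IsIsolated i) :
    InVperp B (e i) := fun c hc => by
  obtain ⟨j, hij⟩ := SimpleGraph.exists_adj_iff_not_isIsolated.mpr hi
  have edgeSign_mul_eq_zero : edgeSign j i * B c (e i) = 0 := by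
    rw [← h.inner_lie_e_z hij.symm, ← lie_skew, hc]
    simp
  rw [h.symm]
  exact (mul_eq_zero.mp edgeSign_mul_eq_zero).resolve_left (edgeSign_ne_zero j i)

variable {T : V →ₗ[ℝ] V} {i : ι}

lemma inner_lie_e_map_e (h : IsGraphLieBasis G B e f z w) (hT : IsKY B T) (hi : ¬ G.IsIsolated i)
    {j k : ι} (hjk : G.Adj j k) (hik : i ≠ k) :
    B ⁅e j, T (e i)⁆ (z ⟨s(j, k), G.mem_edgeSet.mpr hjk⟩) = 0 ∧
      B ⁅e j, T (e i)⁆ (w ⟨s(j, k), G.mem_edgeSet.mpr hjk⟩) = 0 := by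
  have hei := h.inVperp_e hi
  have hej := h.inVperp_e hjk.not_isIsolated_left
  obtain rfl | hij := eq_or_ne i j
  · simp [hT.lie_map_self hei]
  · have lie_eq : ⁅e j, T (e i)⁆ = -⁅e i, T (e j)⁆ := by
      rw [← hT.lie_map_comm hej hei, lie_skew]
    have hi_notMem : i ∉ s(j, k) := by simp [hij, hik]
    simpa only [lie_eq, map_neg, LinearMap.neg_apply, neg_eq_zero] using
      h.inner_lie_e_eq_zero_of_notMem (s := ⟨_, G.mem_edgeSet.mpr hjk⟩) hi_notMem (T (e j))

lemma inner_map_e_eq_zero (h : IsGraphLieBasis G B e f z w) (hT : IsKY B T)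
    (hi : ¬ G.IsIsolated i) {k : ι} (hik : i ≠ k) :
    B (T (e i)) (e k) = 0 ∧ B (T (e i)) (f k) = 0 := by
  by_cases hk : G.IsIsolated k
  · have hTe := hT.inVperp_map (h.inVperp_e hi)
    exact ⟨hTe _ (h.isCentral_e hk), hTe _ (h.rotate.isCentral_e hk)⟩
  · obtain ⟨j, hkj⟩ := SimpleGraph.exists_adj_iff_not_isIsolated.mpr hk
    simpa [h.inner_lie_e_z hkj.symm, h.inner_lie_e_w hkj.symm, edgeSign_ne_zero] using
      h.inner_lie_e_map_e hT hi hkj.symm hik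

lemma map_e (h : IsGraphLieBasis G B e f z w) (hT : IsKY B T) (hi : ¬ G.IsIsolated i) :
    T (e i) = B (T (e i)) (f i) • f i := by
  have inner_map_self : B (T (e i)) (e i) = 0 := by
    rw [← self_eq_neg, ← h.symm (e i), ← hT.1, h.symm (e i)]
  have hTe := hT.inVperp_map (h.inVperp_e hi)
  have hf := h.rotate.inVperp_e hi
  rw [← sub_eq_zero]
  refine h.eq_zero_of_inner_eq_zero (fun c hc => ?_) (fun k => ?_) (fun k => ?_)
  · simp [hTe c hc, hf c hc]
  · obtain rfl | hik := eq_or_ne i k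
    · simp [inner_map_self, h.symm (f _), h.inner_e_f]
    · simp [h.inner_map_e_eq_zero hT hi hik, h.symm (f _), h.inner_e_f]
  · obtain rfl | hik := eq_or_ne i k
    · simp [h.inner_f_f]
    · simp [h.inner_map_e_eq_zero hT hi hik, h.inner_f_f, hik]

end IsGraphLieBasis

theorem statement_18_general {ι : Type*} [LinearOrder ι] {G : SimpleGraph ι}
    {V : Type*} [LieRing V] [LieAlgebra ℝ V] {B : V →ₗ[ℝ] V →ₗ[ℝ] ℝ}
    {e f : ι → V} {z w : G.edgeSet → V} (h : IsGraphLieBasis G B e f z w)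
    {T : V →ₗ[ℝ] V} (hT : IsKY B T) {i : ι} (hi : ¬ G.IsIsolated i) :
    (∀ k, i ≠ k →
      B (T (e i)) (e k) = 0 ∧ B (T (e i)) (f k) = 0 ∧
      B (T (f i)) (e k) = 0 ∧ B (T (f i)) (f k) = 0) ∧
    ∃ a : ℝ, T (e i) = a • f i ∧ T (f i) = -(a • e i) := by
  refine ⟨fun k hik => ?_, B (T (e i)) (f i), h.map_e hT hi, ?_⟩
  · obtain ⟨inner_e_e, inner_e_f⟩ := h.inner_map_e_eq_zero hT hi hik
    obtain ⟨inner_f_f, inner_f_neg_e⟩ := h.rotate.inner_map_e_eq_zero hT hi hik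
    exact ⟨inner_e_e, inner_e_f, by simpa using inner_f_neg_e, inner_f_f⟩
  · have inner_f_neg_e : B (T (f i)) (-e i) = B (T (e i)) (f i) := by
      rw [hT.1, map_neg, map_neg, neg_neg, h.symm]
    simpa [inner_f_neg_e] using h.rotate.map_e hT hi

/-- for a connected graph G and a KY tensor T on 𝔫_G, T has no
components mixing distinct pairs (e_i, f_i); consequently Te_i = a_i·f_i and
Tf_i = -a_i·e_i for some a_i ∈ ℝ. -/
theorem statement_18
    (n : ℕ) (hn : 2 ≤ n) (G : SimpleGraph (Fin n))
    (hconn : G.Connected) (hE : G.edgeSet.Nonempty)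
    (V : Type*) [LieRing V] [LieAlgebra ℝ V]
    (B : V →ₗ[ℝ] V →ₗ[ℝ] ℝ)
    (hsymm : ∀ x y : V, B x y = B y x) (hpos : ∀ x : V, x ≠ 0 → 0 < B x x)
    (e f : Fin n → V) (z w : G.edgeSet → V)
    -- the basis {e i, f i, z s, w s} is orthonormal
    (hee : ∀ i j, B (e i) (e j) = if i = j then 1 else 0)
    (hff : ∀ i j, B (f i) (f j) = if i = j then 1 else 0)
    (hzz : ∀ s t, B (z s) (z t) = if s = t then 1 else 0)
    (hww : ∀ s t, B (w s) (w t) = if s = t then 1 else 0)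
    (hef : ∀ i j, B (e i) (f j) = 0)
    (hez : ∀ i s, B (e i) (z s) = 0)
    (hew : ∀ i s, B (e i) (w s) = 0)
    (hfz : ∀ i s, B (f i) (z s) = 0)
    (hfw : ∀ i s, B (f i) (w s) = 0)
    (hzw : ∀ s t, B (z s) (w t) = 0)
    -- ... and spans V
    (hspan : Submodule.span ℝ
      (Set.range e ∪ Set.range f ∪ Set.range z ∪ Set.range w) = ⊤)
    -- the bracket relations of the Lie algebra 𝔫_G
    (hbee : ∀ i j, ∀ h : G.Adj i j, i < j →
        ⁅e i, e j⁆ = z ⟨s(i, j), G.mem_edgeSet.mpr h⟩)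
    (hbff : ∀ i j, ∀ h : G.Adj i j, i < j →
        ⁅f i, f j⁆ = -z ⟨s(i, j), G.mem_edgeSet.mpr h⟩)
    (hbef : ∀ i j, ∀ h : G.Adj i j, i < j →
        ⁅e i, f j⁆ = w ⟨s(i, j), G.mem_edgeSet.mpr h⟩)
    (hbfe : ∀ i j, ∀ h : G.Adj i j, i < j →
        ⁅f i, e j⁆ = w ⟨s(i, j), G.mem_edgeSet.mpr h⟩)
    (hnadj : ∀ i j, ¬ G.Adj i j →
        ⁅e i, e j⁆ = 0 ∧ ⁅e i, f j⁆ = 0 ∧ ⁅f i, e j⁆ = 0 ∧ ⁅f i, f j⁆ = 0)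
    (hzc : ∀ s, IsCentral (z s)) (hwc : ∀ s, IsCentral (w s))
    (T : V →ₗ[ℝ] V) (hT : IsKY B T) :
    (∀ i k, i ≠ k →
      B (T (e i)) (e k) = 0 ∧ B (T (e i)) (f k) = 0 ∧
      B (T (f i)) (e k) = 0 ∧ B (T (f i)) (f k) = 0) ∧
    (∀ i, ∃ a : ℝ, T (e i) = a • f i ∧ T (f i) = -(a • e i)) := by
  have : Nontrivial (Fin n) := Fin.nontrivial_iff_two_le.mpr hn
  have general := fun i => statement_18_general ⟨hsymm, hpos, hee, hff, hzz, hww, hef, hez, hew,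
    hfz, hfw, hzw, hspan, hbee, hbff, hbef, hbfe, hnadj, hzc, hwc⟩ hT
    (hconn.preconnected.not_isIsolated i)
  exact ⟨fun i => (general i).1, fun i => (general i).2⟩
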